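/- For every x ∈ A_𝒪 and k ∈ ℤ/12 one has (1/3)(1 + ω)·ψ(x, ηᵏ) ∈ 𝒪, so the formula T̂ₖ(x) := x − (1/3)(1 + ω)·ψ(x, ηᵏ)·ηᵏ defines an 𝒪-linear endomorphism of A_𝒪. Each T̂ₖ is a ψ-unitary automorphism of A_𝒪 of order exactly 3, and the braid relations hold: T̂ₖ T̂ₖ₊₁ T̂ₖ = T̂ₖ₊₁ T̂ₖ T̂ₖ₊₁ for all k ∈ ℤ/12, and T̂ₖ T̂ₗ = T̂ₗ T̂ₖ whenever k − l ≢ ±1 (mod 12). -/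

import Mathlib

open Polynomial

noncomputable section

/-- The Eisenstein ring `𝒪 = ℤ[ω]`, where `ω = e^{2πi/6}` is a primitive sixth root of
unity (so `ω² - ω + 1 = 0`), presented as `ℤ[X]/(X² - X + 1)`. -/
abbrev O : Type := AdjoinRoot (X ^ 2 - X + 1 : ℤ[X])

/-- `ω`, the distinguished primitive sixth root of unity in `𝒪`. -/
def ω : O := AdjoinRoot.root _

lemma ω_sq : ω ^ 2 - ω + 1 = 0 := by
  have h := AdjoinRoot.eval₂_root (X ^ 2 - X + 1 : ℤ[X])
  simpa [ω, eval₂_add, eval₂_sub, eval₂_pow, eval₂_X, eval₂_one] using h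

/-- Complex conjugation on the Eisenstein ring: the ring involution with
`conj ω = 1 - ω = ω⁻¹`. -/
def conj : O →+* O :=
  AdjoinRoot.lift (algebraMap ℤ O) (1 - ω) (by
    have h := ω_sq
    simp only [eval₂_add, eval₂_sub, eval₂_pow, eval₂_X, eval₂_one]
    ring_nf
    ring_nf at h
    linear_combination h)

/-- `θ := ω - ω⁻¹ = ω - conj ω = 2ω - 1`, a square root of `-3` in `𝒪`. -/
def θ : O := ω - conj ω

/-- `𝒪[η]/(η¹² − 1)`, modelled as coefficient vectors with respect to the 𝒪-basis
`1, η, η², …, η¹¹`. -/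
abbrev B12 : Type := Fin 12 → O

/-- The monomial `ηᵃ` as an element of `𝒪[η]/(η¹² − 1)`. -/
def ηpow (a : Fin 12) : B12 := Pi.single a 1

/-- Multiplication by `η` on `𝒪[η]/(η¹² − 1)`: the cyclic shift of coefficients. -/
def S (x : B12) : B12 := fun a => x (a - 1)

/-- The coefficient function `F` of the Hermitian form `ψ₀`: `F(0) = 3`,
`F(11) = −1 − ω`, `F(1) = −1 − ω⁻¹` (note `ω⁻¹ = ω⁵`), and `F(k) = 0` otherwise. -/
def F12 : Fin 12 → O := fun k =>
  if k = 0 then 3 else if k = 11 then -1 - ω else if k = 1 then -1 - ω ^ 5 else 0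

/-- The Hermitian form `ψ₀` on `𝒪[η]/(η¹² − 1)`: 𝒪-linear in the first variable,
conjugate-linear in the second, with `ψ₀(ηᵃ, ηᵇ) = F(a − b mod 12)`. -/
def psi0 (x y : B12) : O := ∑ a : Fin 12, ∑ b : Fin 12, x a * conj (y b) * F12 (a - b)

/-- `Σᵢ₌₀¹¹ ηⁱ`. -/
def σ₁ : B12 := fun _ => 1

/-- `Σᵢ₌₀¹¹ (ωη)ⁱ`. -/
def σ₂ : B12 := fun a => ω ^ (a : ℕ)

/-- The 𝒪-submodule of `𝒪[η]/(η¹² − 1)` underlying the ideal `(h)`, where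
`h = (η¹² − 1)/((η − 1)(η − ω⁻¹))`.  Indeed `(h) = (Σηⁱ, Σ(ωη)ⁱ)` (both generators are
multiples of `h`, and `h` is an 𝒪[η]-combination of them since `ω⁻¹ − 1` is a unit),
and as an 𝒪-module this ideal is spanned by `Σηⁱ` and `Σ(ωη)ⁱ` alone, because
`η·Σηⁱ = Σηⁱ` and `η·Σ(ωη)ⁱ = ω⁻¹·Σ(ωη)ⁱ`. -/
def N : Submodule O B12 := Submodule.span O {σ₁, σ₂}

/-- `A_𝒪 = 𝒪[η]/(h)`, a free 𝒪-module of rank 10. -/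
abbrev A12 : Type := B12 ⧸ N

/-- The quotient map `𝒪[η]/(η¹² − 1) → A_𝒪`. -/
def mkA : B12 → A12 := Submodule.Quotient.mk

/-- The image `s_i` in `A_𝒪` of `(ω²η)^i`, for `i = 1, …, 10` (indexed by `Fin 10`,
so `sB i` is `s_{i+1}`). -/
def sB (i : Fin 10) : A12 :=
  mkA (ω ^ (2 * ((i : ℕ) + 1)) • ηpow (Fin.castLE (by omega) i.succ))

lemma ω_sq' : ω ^ 2 = ω - 1 := by linear_combination ω_sq

lemma ω_five : ω ^ 5 = 1 - ω := by
  linear_combination (ω ^ 3 + ω ^ 2 - 1) * ω_sq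

lemma conj_ω : conj ω = 1 - ω := by
  exact AdjoinRoot.lift_root _

lemma conj_conj' (x : O) : conj (conj x) = x := by
  induction x using AdjoinRoot.induction_on with
  | ih p =>
    induction p using Polynomial.induction_on' with
    | add p q hp hq => simp only [map_add, hp, hq]
    | monomial n a =>
      rw [← Polynomial.C_mul_X_pow_eq_monomial]
      have : (AdjoinRoot.mk (X ^ 2 - X + 1 : ℤ[X])) X = ω := rfl
      simp only [map_mul, map_pow, this, conj_ω, map_sub, map_one, sub_sub_cancel]
      simp

lemma three_cancel {a b : O} (h : 3 * a = 3 * b) : a = b := by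
  have hm : (X ^ 2 - X + 1 : ℤ[X]).Monic := by monicity!
  have hfree : Module.Free ℤ O := Module.Free.of_basis (AdjoinRoot.powerBasis' hm).basis
  have : (3 : ℤ) • a = (3 : ℤ) • b := by simpa [zsmul_eq_mul] using h
  exact smul_right_injective O (by norm_num : (3 : ℤ) ≠ 0) this

lemma nontriv_O : (1 : O) ≠ 0 := by
  have hm : (X ^ 2 - X + 1 : ℤ[X]).Monic := by monicity!
  have hd : (X ^ 2 - X + 1 : ℤ[X]).degree ≠ 0 := by
    have : (X ^ 2 - X + 1 : ℤ[X]).degree = 2 := by compute_degree!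
    rw [this]; decide
  have : Nontrivial O := AdjoinRoot.nontrivial _ hd
  exact one_ne_zero

lemma psi0_add (x x' y : B12) : psi0 (x + x') y = psi0 x y + psi0 x' y := by
  simp only [psi0, Pi.add_apply, add_mul, Finset.sum_add_distrib]

lemma psi0_smul (a : O) (x y : B12) : psi0 (a • x) y = a * psi0 x y := by
  simp only [psi0, Pi.smul_apply, smul_eq_mul, Finset.mul_sum, mul_assoc]

lemma conj_F12 (k : Fin 12) : conj (F12 k) = F12 (-k) := by
  have h3 : conj (3 : O) = 3 := map_ofNat conj 3
  fin_cases k <;> simp [F12, conj_ω, ω_five, h3, Fin.ext_iff, Fin.neg_def] 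

lemma psi0_herm (x y : B12) : psi0 y x = conj (psi0 x y) := by
  simp only [psi0, map_sum, map_mul, conj_conj', conj_F12, neg_sub]
  rw [Finset.sum_comm]
  refine Finset.sum_congr rfl fun a _ => Finset.sum_congr rfl fun b _ => ?_
  ring

lemma psi0_ηpow (x : B12) (k : Fin 12) : psi0 x (ηpow k) = ∑ a, x a * F12 (a - k) := by
  unfold psi0
  refine Finset.sum_congr rfl fun a _ => ?_
  rw [Finset.sum_eq_single k]
  · simp [ηpow]
  · intro b _ hb
    simp [ηpow, Pi.single_eq_of_ne hb]
  · simp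

lemma psi0_ηη (a k : Fin 12) : psi0 (ηpow a) (ηpow k) = F12 (a - k) := by
  rw [psi0_ηpow, Finset.sum_eq_single a]
  · simp [ηpow]
  · intro b _ hb
    simp [ηpow, Pi.single_eq_of_ne hb]
  · simp

/-- `(1+ω)F/3`. -/
def G12 : Fin 12 → O := fun k =>
  if k = 0 then 1 + ω else if k = 11 then -ω else if k = 1 then -1 else 0

lemma F_G (k : Fin 12) : (1 + ω) * F12 k = 3 * G12 k := by
  unfold F12 G12
  rw [ω_five]
  split_ifs
  · ring
  · linear_combination -ω_sq
  · linear_combination ω_sq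
  · ring

/-- For every `x ∈ A_𝒪` and `k ∈ ℤ/12` one has
`(1/3)(1 + ω)·ψ(x, ηᵏ) ∈ 𝒪`, so the formula `T̂ₖ(x) := x − (1/3)(1 + ω)·ψ(x, ηᵏ)·ηᵏ`
defines an 𝒪-linear endomorphism of `A_𝒪`.  Each `T̂ₖ` is a ψ-unitary automorphism of
order exactly 3, and the braid relations hold: `T̂ₖT̂ₖ₊₁T̂ₖ = T̂ₖ₊₁T̂ₖT̂ₖ₊₁`, and
`T̂ₖT̂ₗ = T̂ₗT̂ₖ` whenever `k − l ≢ ±1 (mod 12)`.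
(Here `ψ` is the Hermitian form on `A_𝒪` induced by `ψ₀`, and `T̂ₖ` is characterized
denominator-freely by: `T̂ₖ x = x − c • ηᵏ` whenever `(1 + ω)·ψ(x, ηᵏ) = 3c`.) -/
theorem statement15
    (ψA : A12 → A12 → O) (hψA : ∀ x y : B12, ψA (mkA x) (mkA y) = psi0 x y) :
    (∀ (x : A12) (k : Fin 12), ∃ c : O, (1 + ω) * ψA x (mkA (ηpow k)) = 3 * c) ∧
    (∃ T : Fin 12 → A12 → A12, ∀ (k : Fin 12) (x : A12) (c : O),
      (1 + ω) * ψA x (mkA (ηpow k)) = 3 * c → T k x = x - c • mkA (ηpow k)) ∧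
    (∀ T : Fin 12 → A12 → A12,
      (∀ (k : Fin 12) (x : A12) (c : O),
        (1 + ω) * ψA x (mkA (ηpow k)) = 3 * c → T k x = x - c • mkA (ηpow k)) →
      (∀ k : Fin 12,
        (∀ x y : A12, T k (x + y) = T k x + T k y) ∧
        (∀ (a : O) (x : A12), T k (a • x) = a • T k x) ∧
        Function.Bijective (T k) ∧
        (∀ x y : A12, ψA (T k x) (T k y) = ψA x y) ∧
        T k ∘ T k ∘ T k = id ∧ T k ≠ id) ∧
      (∀ k : Fin 12, T k ∘ T (k + 1) ∘ T k = T (k + 1) ∘ T k ∘ T (k + 1)) ∧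
      (∀ k l : Fin 12, k - l ≠ 1 → l - k ≠ 1 → T k ∘ T l = T l ∘ T k)) := by
  have surj : ∀ x : A12, ∃ y : B12, mkA y = x := Submodule.Quotient.mk_surjective N
  have h1 : ∀ (x : A12) (k : Fin 12), ∃ c : O, (1 + ω) * ψA x (mkA (ηpow k)) = 3 * c := by
    intro x k
    obtain ⟨x, rfl⟩ := surj x
    refine ⟨∑ a, x a * G12 (a - k), ?_⟩
    rw [hψA, psi0_ηpow, Finset.mul_sum, Finset.mul_sum]
    refine Finset.sum_congr rfl fun a _ => ?_
    linear_combination x a * F_G (a - k)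
  have ψadd : ∀ x x' y : A12, ψA (x + x') y = ψA x y + ψA x' y := by
    intro x x' y
    obtain ⟨x, rfl⟩ := surj x
    obtain ⟨x', rfl⟩ := surj x'
    obtain ⟨y, rfl⟩ := surj y
    rw [hψA, hψA, ← psi0_add, ← hψA]; rfl
  have ψsmul : ∀ (a : O) (x y : A12), ψA (a • x) y = a * ψA x y := by
    intro a x y
    obtain ⟨x, rfl⟩ := surj x
    obtain ⟨y, rfl⟩ := surj y
    rw [hψA, ← psi0_smul, ← hψA]; rfl
  have ψherm : ∀ x y : A12, ψA y x = conj (ψA x y) := by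
    intro x y
    obtain ⟨x, rfl⟩ := surj x
    obtain ⟨y, rfl⟩ := surj y
    rw [hψA, hψA, psi0_herm]
  have ψsub : ∀ x x' y : A12, ψA (x - x') y = ψA x y - ψA x' y := by
    intro x x' y
    have := ψadd (x - x') x' y
    rw [sub_add_cancel] at this
    rw [this]; ring
  have ψsub' : ∀ x y y' : A12, ψA x (y - y') = ψA x y - ψA x y' := by
    intro x y y'
    rw [ψherm (y - y') x, ψsub, map_sub, ← ψherm, ← ψherm]
  have ψsmul' : ∀ (a : O) (x y : A12), ψA x (a • y) = conj a * ψA x y := by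
    intro a x y
    rw [ψherm (a • y) x, ψsmul, map_mul, ← ψherm]
  have ψee : ∀ a k : Fin 12, ψA (mkA (ηpow a)) (mkA (ηpow k)) = F12 (a - k) := by
    intro a k
    rw [hψA, psi0_ηη]
  choose g' hg' using h1
  refine ⟨fun x k => ⟨_, hg' x k⟩, ⟨fun k x => x - g' x k • mkA (ηpow k), ?_⟩, ?_⟩
  · intro k x c hc
    rw [← three_cancel ((hg' x k).symm.trans hc)]
  intro T hT
  have gadd : ∀ x y k, g' (x + y) k = g' x k + g' y k := by
    intro x y k
    apply three_cancel
    rw [← hg', ψadd]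
    linear_combination hg' x k + hg' y k
  have gsmul : ∀ (a : O) x k, g' (a • x) k = a * g' x k := by
    intro a x k
    apply three_cancel
    rw [← hg', ψsmul]
    linear_combination a * hg' x k
  have gsub : ∀ x y k, g' (x - y) k = g' x k - g' y k := by
    intro x y k
    apply three_cancel
    rw [← hg', ψsub]
    linear_combination hg' x k - hg' y k
  have ge : ∀ l k, g' (mkA (ηpow l)) k = G12 (l - k) := by
    intro l k
    apply three_cancel
    rw [← hg', ψee, F_G]
  have hT' : ∀ k x, T k x = x - g' x k • mkA (ηpow k) := fun k x => hT k x _ (hg' x k)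
  have G0 : G12 0 = 1 + ω := by simp [G12]
  have hcube : ∀ k, T k ∘ T k ∘ T k = id := by
    intro k
    funext x
    simp only [Function.comp_apply, id, hT', gsub, gsmul, ge, sub_self, G0]
    generalize mkA (ηpow k) = e
    generalize g' x k = c
    match_scalars
    · ring
    · linear_combination -c * ω_sq
  refine ⟨fun k => ⟨?_, ?_, ?_, ?_, hcube k, ?_⟩, ?_, ?_⟩
  · intro x y
    simp only [hT', gadd]
    module
  · intro a x
    simp only [hT', gsmul]
    module
  · refine Function.bijective_iff_has_inverse.2 ⟨T k ∘ T k, fun x => congrFun (hcube k) x,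
      fun x => congrFun (hcube k) x⟩
  · intro x y
    have hx := hg' x k
    have hy := congrArg conj (hg' y k)
    simp only [map_mul, map_add, map_one, conj_ω, map_ofNat] at hy
    rw [← ψherm] at hy
    simp only [hT', ψsub, ψsub', ψsmul, ψsmul', ψee, sub_self]
    have F0 : F12 0 = 3 := by simp [F12]
    rw [F0]
    generalize ψA x (mkA (ηpow k)) = p at *
    generalize ψA (mkA (ηpow k)) y = q at *
    generalize g' x k = c at *
    generalize conj (g' y k) = d at *
    apply three_cancel
    linear_combination (-3 * d + q) * hx + (p - (1 + ω) * p) * hy - p * q * ω_sq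
  · intro h
    have h2 := congrFun h (mkA (ηpow k))
    rw [hT', ge, sub_self, G0, id, sub_eq_self] at h2
    have h3 := ψsmul (1 + ω) (mkA (ηpow k)) (mkA (ηpow k))
    have h4 := ψsmul 0 (mkA (ηpow k)) (mkA (ηpow k))
    rw [h2, ψee, sub_self] at h3
    rw [zero_smul, zero_mul] at h4
    have F0 : F12 0 = 3 := by simp [F12]
    rw [h4, F0] at h3
    apply nontriv_O
    apply three_cancel
    apply three_cancel
    linear_combination -(2 - ω) * h3 + 3 * ω_sq
  · intro k
    funext x
    have e1 : k + 1 - k = 1 := by abel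
    have e2 : k - (k + 1) = 11 := by
      rw [sub_add_cancel_left]; decide
    have G1 : G12 1 = -1 := by simp [G12]
    have G11 : G12 11 = -ω := by simp [G12]
    simp only [Function.comp_apply, hT', gsub, gsmul, ge, sub_self, G0, e1, e2, G1, G11]
    generalize mkA (ηpow k) = e
    generalize mkA (ηpow (k + 1)) = f
    generalize g' x k = c
    generalize g' x (k + 1) = d
    match_scalars
    · ring
    · ring
    · ring
  · intro k l h1 h2
    by_cases hkl : k = l
    · rw [hkl]
    have key : ∀ k l : Fin 12, k ≠ l → k - l ≠ 1 → l - k ≠ 1 → G12 (k - l) = 0 := by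
      intro k l h h1 h2
      have h3 : k - l ≠ 11 := by
        intro h3
        apply h2
        rw [← neg_sub, h3]; decide
      simp [G12, h1, h3, sub_eq_zero, h]
    funext x
    simp only [Function.comp_apply, hT', gsub, gsmul, ge, key k l hkl h1 h2,
      key l k (Ne.symm hkl) h2 h1]
    module

end
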